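/- arXiv:2411.01888 — 2 statements merged into one kernel-verified Lean document; each statement's English description precedes it below -/
import Mathlib

section
/- Let m ≥ 2 be an integer and t > 0. Then for every n ∈ ℕ and every u ∈ [−1,1]: |d_{m,n}^t(u)| ≤ e^{−(n²/2 + n(m−1))t/2} · 2^{14} · (n+m−2)^{2m+3}, and d_{m,0}^t(u) = d_{m,1}^t(u) = d_{m,2}^t(u) = d_{m,3}^t(u) = 0. -/
/-- The Gegenbauer polynomials `C_l^α`, defined by the recurrence
`C_0^α(u) = 1`, `C_1^α(u) = 2αu`, and
`C_l^α(u) = (2u(l+α−1)C_{l−1}^α(u) − (l+2α−2)C_{l−2}^α(u))/l` for `l ≥ 2`. -/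
noncomputable def gegenbauer (α : ℝ) : ℕ → ℝ → ℝ
  | 0, _ => 1
  | 1, u => 2 * α * u
  | (l + 2), u =>
      (2 * u * (((l : ℝ) + 2) + α - 1) * gegenbauer α (l + 1) u
        - (((l : ℝ) + 2) + 2 * α - 2) * gegenbauer α l u) / ((l : ℝ) + 2)

/-- `c_{m,l}^t(u)`: the coefficient functions of the heat kernel expansion on `ℝP^m`,
zero for `l` odd or `l = 0`. -/
noncomputable def cmt (m : ℕ) (t : ℝ) (l : ℕ) (u : ℝ) : ℝ :=
  if l % 2 = 0 ∧ l ≠ 0 then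
    Real.exp (-((l : ℝ) * ((l : ℝ) + (m : ℝ) - 1)) * t / 2)
      * ((2 * (l : ℝ) + (m : ℝ) - 1) / ((m : ℝ) - 1))
      * gegenbauer (((m : ℝ) - 1) / 2) l u
  else 0

/-- `d_{m,n}^t(u) := Σ_{l=0}^n c_{m,l}^t(u)·c_{m,n−l}^t(u)` (Cauchy product coefficients). -/
noncomputable def dmt (m : ℕ) (t : ℝ) (n : ℕ) (u : ℝ) : ℝ :=
  ∑ l ∈ Finset.range (n + 1), cmt m t l u * cmt m t (n - l) u

/-- `h_{m,k}^t(u) := Σ_{n=0}^k d_{m,n}^t(u)·c_{m,k−n}^t(u)` (triple Cauchy product coefficients). -/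
noncomputable def hmt (m : ℕ) (t : ℝ) (k : ℕ) (u : ℝ) : ℝ :=
  ∑ n ∈ Finset.range (k + 1), dmt m t n u * cmt m t (k - n) u

/-!
Factor `1 - 2uX + X² = (1 - zX)(1 - wX)` with `z = e^{iθ}`, `w = e^{-iθ}` and `u = cos θ`. Then
`∑ C_l^α(u) X^l = (1 - zX)^{-α} (1 - wX)^{-α}`, because both sides satisfy the differential equation
`(1 - 2uX + X²) F' = 2α(u - X) F`. As `|z| = |w| = 1` and the coefficients of `(1 - X)^{-α}` are
nonnegative, `|C_l^α(u)|` is at most the `l`-th coefficient of `(1 - X)^{-2α}`; for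
`α = (m - 1) / 2` this is a binomial coefficient, which is polynomially bounded in `l`. The
Gaussian factor of `d_{m,n}^t` comes from `l² + (n - l)² ≥ n² / 2`.
-/

open Finset Ring

section Multichoose

variable {R : Type*} [CommRing R] [BinomialRing R]

lemma add_one_mul_multichoose_add_one (r : R) (k : ℕ) :
    ((k : R) + 1) * multichoose r (k + 1) = (r + k) * multichoose r k := by
  let : IsAddTorsionFree R := BinomialRing.toIsAddTorsionFree
  refine nsmul_right_injective k.factorial_ne_zero ?_
  calc k.factorial • (((k : R) + 1) * multichoose r (k + 1))
      = (k + 1).factorial • multichoose r (k + 1) := by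
        rw [nsmul_eq_mul, nsmul_eq_mul, Nat.factorial_succ]
        push_cast
        ring
    _ = k.factorial • multichoose r k * (r + k) := by
        simp only [factorial_nsmul_multichoose_eq_ascPochhammer,
          Polynomial.ascPochhammer_smeval_eq_eval, ascPochhammer_succ_eval]
    _ = k.factorial • ((r + k) * multichoose r k) := by rw [smul_mul_assoc, mul_comm]

lemma multichoose_nonneg [LinearOrder R] [IsStrictOrderedRing R] {r : R} (hr : 0 ≤ r) (k : ℕ) :
    0 ≤ multichoose r k := by
  induction k with
  | zero => simp
  | succ k ih =>
    refine nonneg_of_mul_nonneg_right ?_ (by positivity : 0 < (k : R) + 1)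
    rw [add_one_mul_multichoose_add_one]
    positivity

lemma multichoose_natCast_add_one (p k : ℕ) :
    multichoose ((p : R) + 1) k = ((k + p).choose p : ℕ) := by
  rw [multichoose_eq, add_right_comm, add_sub_cancel_right, add_comm, ← Nat.cast_add,
    choose_natCast, Nat.choose_symm_add]

end Multichoose

section NegBinomialSeries

open PowerSeries

lemma coeff_X_mul_derivative {A : Type*} [CommSemiring A] (F : A⟦X⟧) (l : ℕ) :
    coeff l (X * d⁄dX A F) = l * coeff l F := by
  cases l with
  | zero => simp
  | succ l => rw [coeff_succ_X_mul, coeff_derivative, mul_comm, Nat.cast_succ]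

variable {R A : Type*} [CommRing R] [BinomialRing R] [CommRing A] [Algebra R A]

/-- The binomial series of `(1 - aX)^(-r)`. -/
noncomputable def negBinomialSeries (r : R) (a : A) : A⟦X⟧ :=
  rescale (-a) (binomialSeries A (-r))

lemma coeff_negBinomialSeries (r : R) (a : A) (k : ℕ) :
    coeff k (negBinomialSeries r a) = multichoose r k • a ^ k := by
  rw [negBinomialSeries, coeff_rescale, binomialSeries_coeff, choose_neg', mul_smul_comm, mul_one,
    neg_pow, ← Int.cast_negOnePow_natCast]
  obtain h | h := Int.units_eq_one_or (Int.negOnePow k) <;> simp [h]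

lemma constantCoeff_negBinomialSeries (r : R) (a : A) :
    constantCoeff (negBinomialSeries r a) = 1 := by
  simp [← coeff_zero_eq_constantCoeff_apply, coeff_negBinomialSeries]

lemma negBinomialSeries_add (r s : R) (a : A) :
    negBinomialSeries (r + s) a = negBinomialSeries r a * negBinomialSeries s a := by
  simp only [negBinomialSeries, neg_add, binomialSeries_add, map_mul]

lemma sum_multichoose_mul_multichoose (r s : R) (n : ℕ) :
    ∑ p ∈ antidiagonal n, multichoose r p.1 * multichoose s p.2 = multichoose (r + s) n := by
  simpa [coeff_mul, coeff_negBinomialSeries] using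
    (congrArg (coeff n) (negBinomialSeries_add r s (1 : R))).symm

lemma one_sub_mul_derivative_negBinomialSeries (r : R) (a : A) :
    (1 - C a * X) * d⁄dX A (negBinomialSeries r a) =
      C (algebraMap R A r * a) * negBinomialSeries r a := by
  ext k
  have hrec := congrArg (algebraMap R A) (add_one_mul_multichoose_add_one r k)
  simp only [map_mul, map_add, map_natCast, map_one] at hrec
  rw [sub_mul, one_mul, mul_assoc, map_sub, coeff_C_mul, coeff_C_mul, coeff_X_mul_derivative,
    coeff_derivative]
  simp only [coeff_negBinomialSeries, Algebra.smul_def]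
  linear_combination a ^ (k + 1) * hrec

lemma quadratic_mul_derivative_negBinomialSeries_mul (r : R) (z w : A) :
    (1 - C z * X) * (1 - C w * X) * d⁄dX A (negBinomialSeries r z * negBinomialSeries r w) =
      C (algebraMap R A r) * (C (z + w) - 2 * C (z * w) * X) *
        (negBinomialSeries r z * negBinomialSeries r w) := by
  have hz := one_sub_mul_derivative_negBinomialSeries r z
  have hw := one_sub_mul_derivative_negBinomialSeries r w
  simp only [Derivation.leibniz, smul_eq_mul, map_mul, map_add] at hz hw ⊢
  linear_combination (1 - C w * X) * negBinomialSeries r w * hz +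
    (1 - C z * X) * negBinomialSeries r z * hw

variable {B : Type*} [NormedCommRing B] [NormOneClass B] [NormedAlgebra ℝ B]

lemma norm_coeff_negBinomialSeries_le {r : ℝ} (hr : 0 ≤ r) {a : B} (ha : ‖a‖ ≤ 1) (k : ℕ) :
    ‖coeff k (negBinomialSeries r a)‖ ≤ multichoose r k := by
  rw [coeff_negBinomialSeries, norm_smul, Real.norm_of_nonneg (multichoose_nonneg hr k)]
  exact mul_le_of_le_one_right (multichoose_nonneg hr k)
    ((norm_pow_le a k).trans (pow_le_one₀ (norm_nonneg a) ha))

lemma norm_coeff_negBinomialSeries_mul_le {r s : ℝ} (hr : 0 ≤ r) (hs : 0 ≤ s) {z w : B}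
    (hz : ‖z‖ ≤ 1) (hw : ‖w‖ ≤ 1) (n : ℕ) :
    ‖coeff n (negBinomialSeries r z * negBinomialSeries s w)‖ ≤ multichoose (r + s) n := by
  rw [coeff_mul, ← sum_multichoose_mul_multichoose]
  exact norm_sum_le_of_le _ fun p _ => norm_mul_le_of_le
    (norm_coeff_negBinomialSeries_le hr hz p.1) (norm_coeff_negBinomialSeries_le hs hw p.2)

end NegBinomialSeries

section Gegenbauer

open PowerSeries

lemma add_two_mul_gegenbauer_add_two (α u : ℝ) (l : ℕ) :
    ((l : ℝ) + 2) * gegenbauer α (l + 2) u =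
      2 * u * (l + 1 + α) * gegenbauer α (l + 1) u - (l + 2 * α) * gegenbauer α l u := by
  rw [gegenbauer]
  field_simp
  ring

lemma coeff_eq_gegenbauer_of_ode {A : Type*} [CommRing A] [Algebra ℝ A] {α u : ℝ} {F : A⟦X⟧}
    (hF₀ : constantCoeff F = 1)
    (hF : (1 - C (algebraMap ℝ A (2 * u)) * X + X ^ 2) * d⁄dX A F =
      C (algebraMap ℝ A (2 * α)) * (C (algebraMap ℝ A u) - X) * F) (l : ℕ) :
    coeff l F = algebraMap ℝ A (gegenbauer α l u) := by
  have hcoeff (k : ℕ) := congrArg (coeff k) hF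
  simp only [sub_mul, add_mul, mul_sub, one_mul, mul_assoc, pow_two, map_sub, map_add, map_mul,
    coeff_C_mul, coeff_derivative] at hcoeff
  induction l using Nat.twoStepInduction with
  | zero => simp [gegenbauer, hF₀]
  | one => simpa [gegenbauer, hF₀, mul_assoc] using hcoeff 0
  | more l ih₀ ih₁ =>
    have h := hcoeff (l + 1)
    have hrec := congrArg (algebraMap ℝ A) (add_two_mul_gegenbauer_add_two α u l)
    simp only [coeff_succ_X_mul, coeff_X_mul_derivative, coeff_derivative, ih₀, ih₁] at h
    have hunit : IsUnit ((l : A) + 2) := by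
      simpa only [map_add, map_natCast, map_ofNat] using
        (isUnit_iff_ne_zero.2 (by positivity : (l : ℝ) + 2 ≠ 0)).map (algebraMap ℝ A)
    refine hunit.mul_left_cancel ?_
    simp only [map_mul, map_add, map_sub, map_natCast, map_one, map_ofNat] at hrec h
    push_cast at h
    linear_combination h - hrec

theorem coeff_negBinomialSeries_mul_eq_gegenbauer {A : Type*} [CommRing A] [Algebra ℝ A]
    (α : ℝ) {u : ℝ} {z w : A} (hmul : z * w = 1) (hadd : z + w = algebraMap ℝ A (2 * u)) (l : ℕ) :
    coeff l (negBinomialSeries α z * negBinomialSeries α w) =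
      algebraMap ℝ A (gegenbauer α l u) := by
  refine coeff_eq_gegenbauer_of_ode (by simp [constantCoeff_negBinomialSeries]) ?_ l
  have hode := quadratic_mul_derivative_negBinomialSeries_mul α z w
  have hC_mul : (C z * C w : A⟦X⟧) = 1 := by rw [← map_mul, hmul, map_one]
  have hC_add : (C z + C w : A⟦X⟧) = 2 * C (algebraMap ℝ A u) := by
    rw [← map_add, hadd, map_mul, map_mul, map_ofNat, map_ofNat]
  set F := negBinomialSeries α z * negBinomialSeries α w
  simp only [map_mul, map_add, map_ofNat] at hode ⊢
  linear_combination hode + (X * d⁄dX A F + C (algebraMap ℝ A α) * F) * hC_add -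
    (X ^ 2 * d⁄dX A F + 2 * C (algebraMap ℝ A α) * X * F) * hC_mul

theorem abs_gegenbauer_le_multichoose {α : ℝ} (hα : 0 ≤ α) (l : ℕ) {u : ℝ}
    (hu : u ∈ Set.Icc (-1 : ℝ) 1) :
    |gegenbauer α l u| ≤ multichoose (2 * α) l := by
  obtain ⟨θ, rfl⟩ : ∃ θ, Real.cos θ = u := ⟨Real.arccos u, Real.cos_arccos hu.1 hu.2⟩
  have hmul : Complex.exp (θ * Complex.I) * Complex.exp ((-θ : ℝ) * Complex.I) = 1 := by
    simp [← Complex.exp_add]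
  have hadd : Complex.exp (θ * Complex.I) + Complex.exp ((-θ : ℝ) * Complex.I) =
      algebraMap ℝ ℂ (2 * Real.cos θ) := by
    simp [Complex.two_cos]
  calc |gegenbauer α l (Real.cos θ)|
      = ‖algebraMap ℝ ℂ (gegenbauer α l (Real.cos θ))‖ := by rw [norm_algebraMap', Real.norm_eq_abs]
    _ ≤ multichoose (α + α) l := by
      rw [← coeff_negBinomialSeries_mul_eq_gegenbauer α hmul hadd]
      exact norm_coeff_negBinomialSeries_mul_le hα hα (Complex.norm_exp_ofReal_mul_I _).le
        (Complex.norm_exp_ofReal_mul_I _).le l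
    _ = multichoose (2 * α) l := by rw [two_mul]

theorem abs_gegenbauer_sub_one_half_le {m : ℕ} (hm : 2 ≤ m) (l : ℕ) {u : ℝ}
    (hu : u ∈ Set.Icc (-1 : ℝ) 1) :
    |gegenbauer (((m : ℝ) - 1) / 2) l u| ≤ ((l : ℝ) + m - 2) ^ (m - 2) := by
  obtain ⟨p, rfl⟩ := Nat.exists_eq_add_of_le' hm
  have index_eq : 2 * ((((p + 2 : ℕ) : ℝ) - 1) / 2) = p + 1 := by push_cast; ring
  have base_eq : (l : ℝ) + (p + 2 : ℕ) - 2 = (l + p : ℕ) := by push_cast; ring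
  calc |gegenbauer ((((p + 2 : ℕ) : ℝ) - 1) / 2) l u|
      ≤ multichoose ((p : ℝ) + 1) l := by
        rw [← index_eq]
        exact abs_gegenbauer_le_multichoose (by linarith [p.cast_nonneg (α := ℝ)]) l hu
    _ = ((l + p).choose p : ℕ) := multichoose_natCast_add_one p l
    _ ≤ ((l : ℝ) + (p + 2 : ℕ) - 2) ^ (p + 2 - 2) := by
        rw [base_eq, Nat.add_sub_cancel]
        exact mod_cast Nat.choose_le_pow (l + p) p

end Gegenbauer

lemma abs_cmt_le {m : ℕ} (hm : 2 ≤ m) (t : ℝ) (l : ℕ) {u : ℝ} (hu : u ∈ Set.Icc (-1 : ℝ) 1) :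
    |cmt m t l u| ≤
      Real.exp (-((l : ℝ) * (l + m - 1)) * t / 2) * (2 * ((l : ℝ) + m) ^ (m - 1)) := by
  have hm' : (2 : ℝ) ≤ m := mod_cast hm
  have : (0 : ℝ) ≤ l := l.cast_nonneg
  have ratio_nonneg : 0 ≤ (2 * (l : ℝ) + m - 1) / (m - 1) :=
    div_nonneg (by linarith) (by linarith)
  have ratio_le : (2 * (l : ℝ) + m - 1) / (m - 1) ≤ 2 * (l + m) := by
    rw [div_le_iff₀ (by linarith)]
    nlinarith
  have gegenbauer_le : |gegenbauer (((m : ℝ) - 1) / 2) l u| ≤ ((l : ℝ) + m) ^ (m - 2) :=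
    (abs_gegenbauer_sub_one_half_le hm l hu).trans
      (pow_le_pow_left₀ (by linarith) (by linarith) _)
  rw [cmt]
  split_ifs
  · rw [abs_mul, abs_mul, Real.abs_exp, abs_of_nonneg ratio_nonneg, mul_assoc]
    refine mul_le_mul_of_nonneg_left ?_ (Real.exp_nonneg _)
    calc (2 * (l : ℝ) + m - 1) / (m - 1) * |gegenbauer (((m : ℝ) - 1) / 2) l u|
        ≤ 2 * (l + m) * ((l : ℝ) + m) ^ (m - 2) := by gcongr
      _ = 2 * ((l : ℝ) + m) ^ (m - 1) := by
          rw [(by lia : m - 1 = m - 2 + 1), pow_succ', mul_assoc]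
  · rw [abs_zero]
    positivity

lemma cmt_eq_zero_of_lt_two (m : ℕ) (t : ℝ) {l : ℕ} (hl : l < 2) (u : ℝ) : cmt m t l u = 0 :=
  if_neg (by lia)

lemma dmt_eq_sum_Icc (m : ℕ) (t : ℝ) (n : ℕ) (u : ℝ) :
    dmt m t n u = ∑ l ∈ Icc 2 (n - 2), cmt m t l u * cmt m t (n - l) u := by
  refine (sum_subset (fun l hl => ?_) fun l hl hl' => ?_).symm
  · rw [mem_Icc] at hl
    exact mem_range.2 (by lia)
  · rw [mem_Icc, not_and_or, not_le, not_le] at hl'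
    rw [mem_range] at hl
    rcases hl' with hl' | hl'
    · rw [cmt_eq_zero_of_lt_two m t hl', zero_mul]
    · rw [cmt_eq_zero_of_lt_two m t (by lia : n - l < 2), mul_zero]

lemma dmt_eq_zero_of_lt_four (m : ℕ) (t : ℝ) {n : ℕ} (hn : n < 4) (u : ℝ) : dmt m t n u = 0 := by
  rw [dmt_eq_sum_Icc, Icc_eq_empty (by lia), sum_empty]

lemma abs_cmt_mul_cmt_le {m : ℕ} (hm : 2 ≤ m) {t : ℝ} (ht : 0 ≤ t) (a b : ℕ) {u : ℝ}
    (hu : u ∈ Set.Icc (-1 : ℝ) 1) :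
    |cmt m t a u * cmt m t b u| ≤
      Real.exp (-(((a : ℝ) + b) ^ 2 / 2 + ((a : ℝ) + b) * (m - 1)) * t / 2) *
        (2 ^ 2 * (((a : ℝ) + m) * (b + m)) ^ (m - 1)) := by
  have gaussian_le : ((a : ℝ) + b) ^ 2 / 2 + ((a : ℝ) + b) * (m - 1) ≤
      a * (a + m - 1) + b * (b + m - 1) := by
    nlinarith [sq_nonneg ((a : ℝ) - b)]
  rw [abs_mul]
  calc |cmt m t a u| * |cmt m t b u|
      ≤ (Real.exp (-((a : ℝ) * (a + m - 1)) * t / 2) * (2 * ((a : ℝ) + m) ^ (m - 1))) *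
        (Real.exp (-((b : ℝ) * (b + m - 1)) * t / 2) * (2 * ((b : ℝ) + m) ^ (m - 1))) := by
        gcongr <;> exact abs_cmt_le hm t _ hu
    _ = Real.exp (-((a : ℝ) * (a + m - 1) + b * (b + m - 1)) * t / 2) *
        (2 ^ 2 * (((a : ℝ) + m) * (b + m)) ^ (m - 1)) := by
        rw [mul_mul_mul_comm, ← Real.exp_add, mul_pow]
        ring_nf
    _ ≤ _ := by gcongr

lemma abs_dmt_le {m : ℕ} (hm : 2 ≤ m) {t : ℝ} (ht : 0 ≤ t) (n : ℕ) {u : ℝ}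
    (hu : u ∈ Set.Icc (-1 : ℝ) 1) :
    |dmt m t n u| ≤ Real.exp (-((n : ℝ) ^ 2 / 2 + n * (m - 1)) * t / 2) *
      (2 ^ 2 * ((n : ℝ) + m - 2) ^ (2 * m - 1)) := by
  have hm' : (2 : ℝ) ≤ m := mod_cast hm
  have hN : 0 ≤ (n : ℝ) + m - 2 := by linarith [n.cast_nonneg (α := ℝ)]
  have hterm {l : ℕ} (hl : l ∈ Icc 2 (n - 2)) : |cmt m t l u * cmt m t (n - l) u| ≤
      Real.exp (-((n : ℝ) ^ 2 / 2 + n * (m - 1)) * t / 2) *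
        (2 ^ 2 * (((n : ℝ) + m - 2) ^ 2) ^ (m - 1)) := by
    obtain ⟨two_le, le_sub⟩ := mem_Icc.1 hl
    have two_le' : (2 : ℝ) ≤ l := mod_cast two_le
    have le_sub' : (l : ℝ) + 2 ≤ n := mod_cast (by lia : l + 2 ≤ n)
    refine (abs_cmt_mul_cmt_le hm ht l (n - l) hu).trans ?_
    rw [Nat.cast_sub (by lia), add_sub_cancel, sq ((n : ℝ) + m - 2)]
    gcongr ?_ * (_ * ?_ ^ _)
    · exact mul_nonneg (by linarith) (by linarith)
    · exact mul_le_mul (by linarith) (by linarith) (by linarith) hN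
  have hcard : ((#(Icc 2 (n - 2)) : ℕ) : ℝ) ≤ n + m - 2 := by
    have card_le : ((#(Icc 2 (n - 2)) : ℕ) : ℝ) ≤ n := by
      rw [Nat.cast_le, Nat.card_Icc]
      lia
    linarith
  rw [dmt_eq_sum_Icc]
  calc |∑ l ∈ Icc 2 (n - 2), cmt m t l u * cmt m t (n - l) u|
      ≤ #(Icc 2 (n - 2)) * (Real.exp (-((n : ℝ) ^ 2 / 2 + n * (m - 1)) * t / 2) *
          (2 ^ 2 * (((n : ℝ) + m - 2) ^ 2) ^ (m - 1))) := by
        rw [← nsmul_eq_mul]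
        exact (abs_sum_le_sum_abs _ _).trans (sum_le_card_nsmul _ _ _ fun l hl => hterm hl)
    _ ≤ ((n : ℝ) + m - 2) * (Real.exp (-((n : ℝ) ^ 2 / 2 + n * (m - 1)) * t / 2) *
          (2 ^ 2 * (((n : ℝ) + m - 2) ^ 2) ^ (m - 1))) := by gcongr
    _ = _ := by
        rw [← pow_mul, (by lia : 2 * m - 1 = 2 * (m - 1) + 1), pow_succ]
        ring

/-- For an integer `m ≥ 2` and `t > 0`: for every `n ∈ ℕ` and `u ∈ [−1,1]`,
`|d_{m,n}^t(u)| ≤ e^{−(n²/2+n(m−1))t/2}·2^{14}·(n+m−2)^{2m+3}`, and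
`d_{m,0}^t = d_{m,1}^t = d_{m,2}^t = d_{m,3}^t = 0`. -/
theorem dmt_bound (m : ℕ) (hm : 2 ≤ m) (t : ℝ) (ht : 0 < t) :
    (∀ n : ℕ, ∀ u ∈ Set.Icc (-1 : ℝ) 1,
      |dmt m t n u| ≤ Real.exp (-(((n : ℝ)^2 / 2) + (n : ℝ) * ((m : ℝ) - 1)) * t / 2)
        * 2^14 * ((n : ℝ) + (m : ℝ) - 2)^(2 * m + 3)) ∧
    (∀ u ∈ Set.Icc (-1 : ℝ) 1,
      dmt m t 0 u = 0 ∧ dmt m t 1 u = 0 ∧ dmt m t 2 u = 0 ∧ dmt m t 3 u = 0) := by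
  refine ⟨fun n u hu => ?_, fun u _ => ?_⟩
  · have hm' : (2 : ℝ) ≤ m := mod_cast hm
    rcases Nat.eq_zero_or_pos n with rfl | hn
    · rw [dmt_eq_zero_of_lt_four m t (by norm_num), abs_zero]
      have : 0 ≤ ((0 : ℕ) : ℝ) + m - 2 := by simpa
      positivity
    · have hn' : (1 : ℝ) ≤ n := mod_cast hn
      have one_le : 1 ≤ (n : ℝ) + m - 2 := by linarith
      refine (abs_dmt_le hm ht.le n hu).trans ?_
      rw [mul_assoc]
      gcongr
      · norm_num
      · norm_num
      · lia
  · refine ⟨?_, ?_, ?_, ?_⟩ <;> exact dmt_eq_zero_of_lt_four m t (by norm_num) u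
end

section
/- Let m ≥ 2 be an integer, r_m := √(2(m+1)/m), and define Φ(x) := (1/2)·√(m/(2(m+1)))·F_m(x,x) for x ∈ ℝ^{m+1}. Then for all x, y ∈ ℝ^{m+1} with ‖x‖ = ‖y‖ = r_m: ‖Φ(x) − Φ(y)‖² = −(m/(2(m+1)))·⟨x,y⟩² + 2(m+1)/m. Equivalently, ‖F_m(x,x) − F_m(y,y)‖² = −4(⟨x,y⟩² − (2(m+1)/m)²). -/
open RealInnerProductSpace

/-- Dimension of the target of `F_{k+1}`: `dimF k = (k+1)(k+4)/2`. -/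
def dimF : ℕ → ℕ
  | 0 => 2
  | (k + 1) => dimF k + (k + 3)

/-- The recursively defined maps `F_{k+1} : ℝ^{k+2} × ℝ^{k+2} → ℝ^{(k+1)(k+4)/2}`
(indexed so that `F k` is the map called `F_{k+1}` in the paper, i.e. `F_m = F (m-1)`):
`F_1((x₁,x₂),(y₁,y₂)) = (x₁y₁ − x₂y₂, x₁y₂ + x₂y₁)` and
`F_{m+1}((x,x_{m+2}),(y,y_{m+2}))
  = (F_m(x,y), x_{m+2}y + y_{m+2}x, τ_{m+1}(⟨x,y⟩ − (m+1)x_{m+2}y_{m+2}))`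
with `τ_{m+1} = √(2/((m+1)(m+2)))`. -/
noncomputable def F : (k : ℕ) → (Fin (k + 2) → ℝ) → (Fin (k + 2) → ℝ) → (Fin (dimF k) → ℝ)
  | 0, x, y => ![x 0 * y 0 - x 1 * y 1, x 0 * y 1 + x 1 * y 0]
  | (k + 1), x, y =>
      Fin.append (m := dimF k + (k + 2)) (n := 1)
        (Fin.append
          (F k (fun i => x i.castSucc) (fun i => y i.castSucc))
          (fun i : Fin (k + 2) =>
            x (Fin.last (k + 2)) * y i.castSucc + y (Fin.last (k + 2)) * x i.castSucc))
        (fun _ : Fin 1 =>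
          Real.sqrt (2 / (((k : ℝ) + 2) * ((k : ℝ) + 3))) *
            ((∑ i : Fin (k + 2), x i.castSucc * y i.castSucc)
              - ((k : ℝ) + 2) * x (Fin.last (k + 2)) * y (Fin.last (k + 2))))

/-- The canonical identification of `Fin n → ℝ` with Euclidean space (used for norms
and inner products). -/
noncomputable def toE {n : ℕ} (v : Fin n → ℝ) : EuclideanSpace ℝ (Fin n) :=
  (EuclideanSpace.equiv (Fin n) ℝ).symm v

/-!
Up to a linear isometry, `F_m (x, y)` is `√2` times the trace-free part of the symmetrized tensor
`(x ⊗ y + y ⊗ x) / 2`. Hence the inner product of two values of `F_m` is an explicit polynomial in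
the inner products of the arguments, which the block structure of `F_{m+1}` lets one verify by
induction on `m`. On the diagonal, expanding `‖F_m (x, x) - F_m (y, y)‖²` gives
`4 (‖x‖² ‖y‖² - ⟪x, y⟫²)` plus a multiple of `(‖x‖² - ‖y‖²)²`, which vanishes when `‖x‖ = ‖y‖`.
-/

section DotProduct

variable {R : Type*} [Mul R] [AddCommMonoid R] {m n : ℕ}

theorem append_dotProduct_append (u u' : Fin m → R) (v v' : Fin n → R) :
    Fin.append u v ⬝ᵥ Fin.append u' v' = u ⬝ᵥ u' + v ⬝ᵥ v' := by
  simp only [dotProduct, Fin.sum_univ_add, Fin.append_left, Fin.append_right]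

theorem dotProduct_eq_init_add_last (u v : Fin (n + 1) → R) :
    u ⬝ᵥ v = Fin.init u ⬝ᵥ Fin.init v + u (Fin.last n) * v (Fin.last n) :=
  Fin.sum_univ_castSucc _

end DotProduct

theorem F_succ (k : ℕ) (x y : Fin (k + 3) → ℝ) :
    F (k + 1) x y =
      Fin.append
        (Fin.append (F k (Fin.init x) (Fin.init y))
          (x (Fin.last _) • Fin.init y + y (Fin.last _) • Fin.init x))
        (fun _ : Fin 1 ↦ √(2 / ((k + 2) * (k + 3))) *
          (Fin.init x ⬝ᵥ Fin.init y - (k + 2) * x (Fin.last _) * y (Fin.last _))) :=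
  rfl

theorem F_succ_dotProduct_F_succ (k : ℕ) (x y z w : Fin (k + 3) → ℝ) :
    F (k + 1) x y ⬝ᵥ F (k + 1) z w =
      F k (Fin.init x) (Fin.init y) ⬝ᵥ F k (Fin.init z) (Fin.init w)
        + (x (Fin.last _) • Fin.init y + y (Fin.last _) • Fin.init x) ⬝ᵥ
          (z (Fin.last _) • Fin.init w + w (Fin.last _) • Fin.init z)
        + 2 / ((k + 2) * (k + 3)) *
          ((Fin.init x ⬝ᵥ Fin.init y - (k + 2) * x (Fin.last _) * y (Fin.last _)) *
            (Fin.init z ⬝ᵥ Fin.init w - (k + 2) * z (Fin.last _) * w (Fin.last _))) := by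
  have sqrt_mul_sqrt : √(2 / ((k + 2) * (k + 3)) : ℝ) * √(2 / ((k + 2) * (k + 3))) =
      2 / ((k + 2) * (k + 3)) := Real.mul_self_sqrt (by positivity)
  have const_dotProduct_const (a b : ℝ) : (fun _ : Fin 1 ↦ a) ⬝ᵥ (fun _ ↦ b) = a * b :=
    Fin.sum_univ_one _
  rw [F_succ, F_succ]
  -- `rw` does not see that `dimF (k + 1)` unfolds to the length of the outer `Fin.append`.
  refine (append_dotProduct_append _ _ _ _).trans ?_
  rw [append_dotProduct_append, const_dotProduct_const, mul_mul_mul_comm, sqrt_mul_sqrt]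

theorem F_dotProduct_F (k : ℕ) (x y z w : Fin (k + 2) → ℝ) :
    F k x y ⬝ᵥ F k z w =
      x ⬝ᵥ z * y ⬝ᵥ w + x ⬝ᵥ w * y ⬝ᵥ z - 2 / (k + 2) * (x ⬝ᵥ y * z ⬝ᵥ w) := by
  induction k with
  | zero =>
    have dotProduct_fin_two (u v : Fin (0 + 2) → ℝ) : u ⬝ᵥ v = u 0 * v 0 + u 1 * v 1 :=
      Matrix.vec2_dotProduct u v
    have F_zero_dotProduct : F 0 x y ⬝ᵥ F 0 z w =
        (x 0 * y 0 - x 1 * y 1) * (z 0 * w 0 - z 1 * w 1)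
        + (x 0 * y 1 + x 1 * y 0) * (z 0 * w 1 + z 1 * w 0) := Matrix.vec2_dotProduct _ _
    simp only [F_zero_dotProduct, dotProduct_fin_two]
    push_cast
    ring
  | succ k ih =>
    rw [F_succ_dotProduct_F_succ, ih]
    simp only [dotProduct_eq_init_add_last (n := k + 2), add_dotProduct, dotProduct_add,
      smul_dotProduct, dotProduct_smul, smul_eq_mul, dotProduct_comm (Fin.init y) (Fin.init z)]
    push_cast
    field_simp
    ring

theorem inner_toE {n : ℕ} (u v : Fin n → ℝ) : ⟪toE u, toE v⟫ = u ⬝ᵥ v :=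
  dotProduct_comm v u

theorem inner_toE_F (k : ℕ) (x y z w : Fin (k + 2) → ℝ) :
    ⟪toE (F k x y), toE (F k z w)⟫ =
      ⟪toE x, toE z⟫ * ⟪toE y, toE w⟫ + ⟪toE x, toE w⟫ * ⟪toE y, toE z⟫
        - 2 / (k + 2) * (⟪toE x, toE y⟫ * ⟪toE z, toE w⟫) := by
  simp only [inner_toE, F_dotProduct_F]

theorem norm_sq_Phi_diff_general (k : ℕ) (c : ℝ) (x y : Fin (k + 2) → ℝ) :
    ‖c • toE (F k x x) - c • toE (F k y y)‖ ^ 2 =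
      c ^ 2 * (4 * (‖toE x‖ ^ 2 * ‖toE y‖ ^ 2 - ⟪toE x, toE y⟫ ^ 2)
        + 2 * (k + 1) / (k + 2) * (‖toE x‖ ^ 2 - ‖toE y‖ ^ 2) ^ 2) := by
  rw [← smul_sub, norm_smul, mul_pow, Real.norm_eq_abs, sq_abs, norm_sub_sq_real]
  simp only [← real_inner_self_eq_norm_sq, inner_toE_F]
  field_simp
  ring

/-- For an integer `m ≥ 2` (here `m = k+2`), `r_m = √(2(m+1)/m)`, and the map
`Φ(x) = (1/2)√(m/(2(m+1)))·F_m(x,x)`: for all `x, y ∈ ℝ^{m+1}` with `‖x‖ = ‖y‖ = r_m`,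
`‖Φ(x) − Φ(y)‖² = −(m/(2(m+1)))⟨x,y⟩² + 2(m+1)/m`, equivalently
`‖F_m(x,x) − F_m(y,y)‖² = −4(⟨x,y⟩² − (2(m+1)/m)²)`. -/
theorem norm_sq_Phi_diff (k : ℕ) (x y : Fin (k + 3) → ℝ)
    (hx : ‖toE x‖ = Real.sqrt (2 * ((k : ℝ) + 3) / ((k : ℝ) + 2)))
    (hy : ‖toE y‖ = Real.sqrt (2 * ((k : ℝ) + 3) / ((k : ℝ) + 2))) :
    ‖((1 : ℝ)/2 * Real.sqrt (((k : ℝ) + 2) / (2 * ((k : ℝ) + 3)))) • toE (F (k + 1) x x)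
        - ((1 : ℝ)/2 * Real.sqrt (((k : ℝ) + 2) / (2 * ((k : ℝ) + 3)))) • toE (F (k + 1) y y)‖^2
      = -(((k : ℝ) + 2) / (2 * ((k : ℝ) + 3))) * ⟪toE x, toE y⟫^2
        + 2 * ((k : ℝ) + 3) / ((k : ℝ) + 2) ∧
    ‖toE (F (k + 1) x x) - toE (F (k + 1) y y)‖^2
      = -4 * (⟪toE x, toE y⟫^2 - (2 * ((k : ℝ) + 3) / ((k : ℝ) + 2))^2) := by
  have hR : (0 : ℝ) ≤ 2 * (k + 3) / (k + 2) := by positivity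
  have hc : (0 : ℝ) ≤ (k + 2) / (2 * (k + 3)) := by positivity
  constructor
  · rw [norm_sq_Phi_diff_general, hx, hy, mul_pow, Real.sq_sqrt hR, Real.sq_sqrt hc]
    field_simp
    ring
  · have h := norm_sq_Phi_diff_general (k + 1) 1 x y
    rw [one_smul, one_smul, hx, hy, Real.sq_sqrt hR] at h
    linear_combination h
end
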